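/- (Theorem 2.3 of the paper.) Let 0 < a < b, set c = (a+b)/2 and h = (b−a)/2, and define g(t) = (c + h t)^{−1/2} and q(t) = (c + h t)^{−1} for t ∈ [−1, 1]. Let ρ be any real number with 1 < ρ < c/h + √((c/h)² − 1). Then the degree-k₁ truncated Chebyshev expansion g_{k₁} of g and the degree-k₂ truncated Chebyshev expansion q_{k₂} of q satisfy sup_{t∈[−1,1]} |g(t) − g_{k₁}(t)| ≤ 2 ρ^{−k₁} / ((ρ − 1) · √(c − h (ρ + ρ⁻¹)/2)) and sup_{t∈[−1,1]} |q(t) − q_{k₂}(t)| ≤ 2 ρ^{−k₂} / ((ρ − 1) · (c − h (ρ + ρ⁻¹)/2)). -/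

import Mathlib

open Polynomial intervalIntegral

/-!
Under `t = cos θ` the Chebyshev series of `f` is the Fourier series of the even function
`θ ↦ f (cos θ)`. If `f` extends to a holomorphic function `F` bounded by `M` on the Bernstein
ellipse `E_ρ`, then `F ((z + z⁻¹) / 2)` is holomorphic on the annulus `1 ≤ |z| < ρ` and restricts to
`f (cos θ)` on the unit circle, so moving the contour of the Fourier coefficients out towards
`|z| = ρ` bounds the `n`-th Chebyshev coefficient by `2 M ρ⁻ⁿ`. Summing this geometric majorant over
`n > k` bounds the truncation error by `2 M ρ⁻ᵏ / (ρ - 1)`. On `E_ρ` one has `|w| < (ρ + ρ⁻¹) / 2`,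
whence `M = (c - h (ρ + ρ⁻¹) / 2) ^ (-s)` is admissible for `(c + h w) ^ (-s)`.
-/

section

open Complex Metric Set Filter MeasureTheory
open scoped Real Topology

local instance : Fact (0 < 2 * π) := ⟨Real.two_pi_pos⟩

section Circle

lemma coe_toCircle_two_pi (x : ℝ) :
    (AddCircle.toCircle (x : AddCircle (2 * π)) : ℂ) = exp (x * I) := by
  rw [AddCircle.toCircle_apply_mk, div_self Real.two_pi_pos.ne', one_mul, Circle.coe_exp]

lemma re_coe_circle_mem_Icc (z : Circle) : (z : ℂ).re ∈ Icc (-1 : ℝ) 1 :=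
  abs_le.1 ((abs_re_le_norm _).trans_eq z.norm_coe)

lemma fourier_two_pi_coe (n : ℤ) (x : ℝ) :
    fourier n (x : AddCircle (2 * π)) = exp (n * x * I) := by
  rw [fourier_apply, AddCircle.toCircle_zsmul, Circle.coe_zpow, coe_toCircle_two_pi, ← exp_int_mul,
    mul_assoc]

lemma fourier_add_fourier_neg (n : ℤ) (x : ℝ) :
    fourier n (x : AddCircle (2 * π)) + fourier (-n) (x : AddCircle (2 * π)) =
      ((2 * Real.cos (n * x) : ℝ) : ℂ) := by
  rw [fourier_two_pi_coe, fourier_two_pi_coe]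
  push_cast
  rw [Complex.two_cos, neg_mul]

lemma integral_neg_self_eq_integral_add_comp_neg {E : Type*} [NormedAddCommGroup E]
    [NormedSpace ℝ E] {a : ℝ} {g : ℝ → E} (hg : IntervalIntegrable g volume (-a) a) :
    ∫ x in -a..a, g x = ∫ x in 0..a, (g x + g (-x)) := by
  have hzero : (0 : ℝ) ∈ uIcc (-a) a := by simp [mem_uIcc, le_total]
  have hneg : IntervalIntegrable g volume (-a) 0 := hg.mono_set (uIcc_subset_uIcc_left hzero)
  have hpos : IntervalIntegrable g volume 0 a := hg.mono_set (uIcc_subset_uIcc_right hzero)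
  have hreflect : IntervalIntegrable (fun x ↦ g (-x)) volume 0 a := by
    simpa using (IntervalIntegrable.iff_comp_neg (f := g)).1 hneg.symm
  rw [integral_add hpos hreflect, intervalIntegral.integral_comp_neg, neg_zero, add_comm,
    integral_add_adjacent_intervals hneg hpos]

end Circle

section Annulus

variable {E : Type*} [NormedAddCommGroup E] [NormedSpace ℂ E]

lemma fourierCoeff_comp_toCircle (G : ℂ → E) (n : ℤ) :
    fourierCoeff (fun θ : AddCircle (2 * π) ↦ G θ.toCircle) n =
      (2 * π * I : ℂ)⁻¹ • ∮ z in C(0, 1), z ^ (-n - 1) • G z := by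
  rw [fourierCoeff_eq_intervalIntegral _ n 0, zero_add, circleIntegral,
    ← intervalIntegral.integral_smul, ← intervalIntegral.integral_smul]
  refine integral_congr fun θ _ ↦ ?_
  have hz : circleMap 0 1 θ ≠ 0 := circleMap_ne_center one_ne_zero
  have hcirc : (AddCircle.toCircle (θ : AddCircle (2 * π)) : ℂ) = circleMap 0 1 θ := by
    simp [coe_toCircle_two_pi, circleMap]
  simp only [fourier_apply, AddCircle.toCircle_zsmul, Circle.coe_zpow, hcirc, deriv_circleMap,
    smul_smul, zpow_sub_one₀ hz, ← Complex.coe_smul]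
  congr 1
  push_cast
  field_simp

lemma norm_fourierCoeff_comp_toCircle_le [CompleteSpace E] {G : ℂ → E} {r M : ℝ} (hr : 1 ≤ r)
    (hGc : ContinuousOn G (closedBall 0 r \ ball 0 1))
    (hGd : ∀ z ∈ ball 0 r \ closedBall 0 1, DifferentiableAt ℂ G z)
    (hGM : ∀ z ∈ sphere 0 r, ‖G z‖ ≤ M) (n : ℤ) :
    ‖fourierCoeff (fun θ : AddCircle (2 * π) ↦ G θ.toCircle) n‖ ≤ M * r ^ (-n) := by
  have hr₀ : 0 < r := one_pos.trans_le hr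
  have hannulus : (∮ z in C(0, r), z ^ (-n - 1) • G z) = ∮ z in C(0, 1), z ^ (-n - 1) • G z := by
    refine circleIntegral_eq_of_differentiable_on_annulus_off_countable one_pos hr
      countable_empty (.smul (fun z hz ↦ ?_) hGc) fun z hz ↦ .smul ?_ (hGd z hz.1)
    · exact (continuousAt_zpow₀ z _ (.inl fun h ↦ hz.2 (by simp [h]))).continuousWithinAt
    · exact differentiableAt_zpow.2 (.inl fun h ↦ hz.1.2 (by simp [h]))
  rw [fourierCoeff_comp_toCircle, ← hannulus]
  calc _ ≤ r * (r ^ (-n - 1) * M) := by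
        refine circleIntegral.norm_two_pi_i_inv_smul_integral_le_of_norm_le_const hr₀.le
          fun z hz ↦ ?_
        rw [norm_smul, norm_zpow, mem_sphere_zero_iff_norm.1 hz]
        gcongr
        exact hGM z hz
    _ = M * r ^ (-n) := by
        rw [zpow_sub_one₀ hr₀.ne']
        field_simp

end Annulus

section ChebyshevSeries

/-- The `n`-th Chebyshev coefficient `γ_n` of `f` on `[-1, 1]`. -/
noncomputable def chebyshevCoeff (f : ℝ → ℝ) (n : ℕ) : ℝ :=
  ((2 - if n = 0 then 1 else 0) / π) *
    ∫ s in (-1 : ℝ)..1, f s * (Chebyshev.T ℝ n).eval s / √(1 - s ^ 2)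

/-- The truncated Chebyshev expansion `f_k` of `f`, of degree at most `k`: it has `k + 1` terms. -/
noncomputable def chebyshevSum (f : ℝ → ℝ) (k : ℕ) (t : ℝ) : ℝ :=
  ∑ i ∈ Finset.range (k + 1), chebyshevCoeff f i * (Chebyshev.T ℝ i).eval t

/-- The even function `θ ↦ f (cos θ)` on the circle, with `cos θ` written as the real part of the
corresponding point of the unit circle. It is complex-valued so that Mathlib's Fourier series
apply to it. -/
noncomputable def circleLift (f : ℝ → ℝ) (θ : AddCircle (2 * π)) : ℂ :=
  f (θ.toCircle : ℂ).re

variable {f : ℝ → ℝ}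

lemma circleLift_coe (f : ℝ → ℝ) (x : ℝ) : circleLift f x = f (Real.cos x) := by
  rw [circleLift, coe_toCircle_two_pi, exp_ofReal_mul_I_re]

lemma continuous_circleLift (hf : ContinuousOn f (Icc (-1) 1)) :
    Continuous (circleLift f) := by
  have hre : Continuous fun θ : AddCircle (2 * π) ↦ (θ.toCircle : ℂ).re :=
    continuous_re.comp (continuous_subtype_val.comp AddCircle.continuous_toCircle)
  exact continuous_ofReal.comp (hf.comp_continuous hre fun θ ↦ re_coe_circle_mem_Icc _)

lemma chebyshevCoeff_eq_integral_cos (f : ℝ → ℝ) (n : ℕ) :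
    chebyshevCoeff f n = ((2 - if n = 0 then 1 else 0) / π) *
      ∫ θ in 0..π, f (Real.cos θ) * Real.cos (n * θ) := by
  have hcos := (Chebyshev.integral_measureT fun x ↦ f x * (Chebyshev.T ℝ n).eval x).symm.trans
    Chebyshev.integral_measureT_eq_integral_cos
  simp only [Chebyshev.T_real_cos, Int.cast_natCast, Real.sqrt_inv, ← div_eq_mul_inv] at hcos
  rw [chebyshevCoeff, hcos]

lemma fourierCoeff_circleLift (hf : ContinuousOn f (Icc (-1) 1)) (n : ℤ) :
    fourierCoeff (circleLift f) n =
      ((π⁻¹ * ∫ θ in 0..π, f (Real.cos θ) * Real.cos (n * θ) : ℝ) : ℂ) := by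
  have hcont : Continuous fun θ : ℝ ↦
      fourier (-n) (θ : AddCircle (2 * π)) • circleLift f (θ : AddCircle (2 * π)) :=
    ((map_continuous (fourier (-n))).smul (continuous_circleLift hf)).comp
      (AddCircle.continuous_mk' _)
  rw [fourierCoeff_eq_intervalIntegral _ n (-π), show -π + 2 * π = π by ring,
    integral_neg_self_eq_integral_add_comp_neg (hcont.intervalIntegrable _ _),
    ofReal_mul, ← intervalIntegral.integral_ofReal,
    ← intervalIntegral.integral_smul, ← intervalIntegral.integral_const_mul]
  refine integral_congr fun θ _ ↦ ?_
  have hreflect : fourier (-n) ((-θ : ℝ) : AddCircle (2 * π)) =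
      fourier n (θ : AddCircle (2 * π)) := by simp
  simp only [circleLift_coe, hreflect, Real.cos_neg, smul_eq_mul, ← add_mul, real_smul]
  rw [add_comm (fourier _ _), fourier_add_fourier_neg]
  push_cast
  field_simp

lemma fourierCoeff_circleLift_neg (hf : ContinuousOn f (Icc (-1) 1)) (n : ℤ) :
    fourierCoeff (circleLift f) (-n) = fourierCoeff (circleLift f) n := by
  simp [fourierCoeff_circleLift hf]

lemma chebyshevCoeff_eq_fourierCoeff (hf : ContinuousOn f (Icc (-1) 1)) (n : ℕ) :
    (chebyshevCoeff f n : ℂ) =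
      (2 - if n = 0 then 1 else 0) * fourierCoeff (circleLift f) n := by
  simp only [chebyshevCoeff_eq_integral_cos, fourierCoeff_circleLift hf, Int.cast_natCast]
  split_ifs <;> push_cast <;> ring

lemma norm_fourierCoeff_circleLift_le (hf : ContinuousOn f (Icc (-1) 1)) (n : ℕ) :
    ‖fourierCoeff (circleLift f) n‖ ≤ |chebyshevCoeff f n| := by
  rw [← Real.norm_eq_abs, ← norm_real, chebyshevCoeff_eq_fourierCoeff hf, norm_mul]
  refine le_mul_of_one_le_left (norm_nonneg _) ?_
  split_ifs <;> norm_num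

lemma abs_chebyshevCoeff_le (hf : ContinuousOn f (Icc (-1) 1)) (n : ℕ) :
    |chebyshevCoeff f n| ≤ 2 * ‖fourierCoeff (circleLift f) n‖ := by
  rw [← Real.norm_eq_abs, ← norm_real, chebyshevCoeff_eq_fourierCoeff hf, norm_mul]
  gcongr
  split_ifs <;> norm_num

lemma summable_fourierCoeff_circleLift (hf : ContinuousOn f (Icc (-1) 1))
    (hs : Summable (chebyshevCoeff f)) : Summable (fourierCoeff (circleLift f)) := by
  have hnat : Summable fun n : ℕ ↦ fourierCoeff (circleLift f) n :=
    .of_norm_bounded hs.abs (norm_fourierCoeff_circleLift_le hf)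
  exact .of_nat_of_neg hnat (by simpa only [fourierCoeff_circleLift_neg hf] using hnat)

lemma chebyshevCoeff_mul_eval_T_cos (hf : ContinuousOn f (Icc (-1) 1)) (n : ℕ) (θ : ℝ) :
    ((chebyshevCoeff f n * (Chebyshev.T ℝ n).eval (Real.cos θ) : ℝ) : ℂ) =
      fourierCoeff (circleLift f) n * fourier n (θ : AddCircle (2 * π)) +
        fourierCoeff (circleLift f) (-n) * fourier (-n) (θ : AddCircle (2 * π)) -
      if n = 0 then fourierCoeff (circleLift f) 0 else 0 := by
  rw [fourierCoeff_circleLift_neg hf, ← mul_add, fourier_add_fourier_neg, Chebyshev.T_real_cos,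
    ofReal_mul, chebyshevCoeff_eq_fourierCoeff hf]
  obtain rfl | hn := eq_or_ne n 0
  · simp only [Nat.cast_zero, if_true, Int.cast_zero, zero_mul, Real.cos_zero]
    push_cast
    ring
  · simp only [hn, if_false]
    push_cast
    ring

lemma hasSum_chebyshevCoeff_mul_eval_T (hf : ContinuousOn f (Icc (-1) 1))
    (hs : Summable (chebyshevCoeff f)) {t : ℝ} (ht : t ∈ Icc (-1 : ℝ) 1) :
    HasSum (fun n : ℕ ↦ chebyshevCoeff f n * (Chebyshev.T ℝ n).eval t) (f t) := by
  obtain ⟨θ, rfl⟩ : ∃ θ, Real.cos θ = t := ⟨_, Real.cos_arccos ht.1 ht.2⟩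
  have hfourier := has_pointwise_sum_fourier_series_of_summable
    (f := ⟨circleLift f, continuous_circleLift hf⟩)
    (summable_fourierCoeff_circleLift hf hs) (θ : AddCircle (2 * π))
  have hpaired := hfourier.nat_add_neg.sub (hasSum_ite_eq 0 (fourierCoeff (circleLift f) 0))
  simp only [ContinuousMap.coe_mk, fourier_zero, smul_eq_mul, mul_one, add_sub_cancel_right,
    circleLift_coe] at hpaired
  rw [← hasSum_ofReal]
  simpa only [chebyshevCoeff_mul_eval_T_cos hf] using hpaired

end ChebyshevSeries

section BernsteinEllipse

/-- The Joukowski map, which carries the annulus `1 ≤ |z| < ρ` to the Bernstein ellipse `E_ρ` and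
the unit circle to the segment `[-1, 1]`. -/
noncomputable def joukowski (z : ℂ) : ℂ := (z + z⁻¹) / 2

/-- The open Bernstein ellipse `E_ρ`, encoded by its foci `±1` and the length `ρ + ρ⁻¹` of its major
axis. -/
def bernsteinEllipse (ρ : ℝ) : Set ℂ := {w | ‖w - 1‖ + ‖w + 1‖ < ρ + ρ⁻¹}

variable {ρ : ℝ}

lemma isOpen_bernsteinEllipse (ρ : ℝ) : IsOpen (bernsteinEllipse ρ) :=
  isOpen_lt (by fun_prop) (by fun_prop)

lemma norm_lt_of_mem_bernsteinEllipse {w : ℂ} (hw : w ∈ bernsteinEllipse ρ) :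
    ‖w‖ < (ρ + ρ⁻¹) / 2 := by
  have htri : ‖2 * w‖ ≤ ‖w - 1‖ + ‖w + 1‖ := by
    calc ‖2 * w‖ = ‖(w - 1) + (w + 1)‖ := by ring_nf
      _ ≤ ‖w - 1‖ + ‖w + 1‖ := norm_add_le _ _
  rw [norm_mul, Complex.norm_two] at htri
  linarith [mem_ofPred.1 hw]

lemma add_inv_lt_add_inv {r : ℝ} (hr : 1 ≤ r) (hrρ : r < ρ) : r + r⁻¹ < ρ + ρ⁻¹ := by
  have hr₀ : 0 < r := by linarith
  have hρ₀ : 0 < ρ := by linarith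
  have hfactor : ρ + ρ⁻¹ - (r + r⁻¹) = (ρ - r) * (r * ρ - 1) / (r * ρ) := by field_simp; ring
  have hprod : 1 < r * ρ := one_lt_mul_of_le_of_lt hr (hr.trans_lt hrρ)
  rw [← sub_pos, hfactor]
  exact div_pos (mul_pos (sub_pos.2 hrρ) (sub_pos.2 hprod)) (mul_pos hr₀ hρ₀)

lemma ofReal_mem_bernsteinEllipse {t : ℝ} (hρ : 1 < ρ) (ht : t ∈ Icc (-1 : ℝ) 1) :
    (t : ℂ) ∈ bernsteinEllipse ρ := by
  have hfoci : ‖(t : ℂ) - 1‖ + ‖(t : ℂ) + 1‖ = 1 + 1⁻¹ := by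
    norm_cast
    rw [Real.norm_of_nonpos (by linarith [ht.2]), Real.norm_of_nonneg (by linarith [ht.1])]
    ring
  exact hfoci.trans_lt (add_inv_lt_add_inv le_rfl hρ)

lemma norm_joukowski_sub_one_add_norm_joukowski_add_one {z : ℂ} (hz : z ≠ 0) :
    ‖joukowski z - 1‖ + ‖joukowski z + 1‖ = ‖z‖ + ‖z‖⁻¹ := by
  have hsub : joukowski z - 1 = (z - 1) ^ 2 / (2 * z) := by rw [joukowski]; field_simp; ring
  have hadd : joukowski z + 1 = (z + 1) ^ 2 / (2 * z) := by rw [joukowski]; field_simp; ring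
  have hpar := parallelogram_law_with_norm ℝ z 1
  have hz' : ‖z‖ ≠ 0 := norm_ne_zero_iff.2 hz
  simp only [hsub, hadd, norm_div, norm_pow, norm_mul, Complex.norm_two]
  rw [norm_one] at hpar
  field_simp
  linarith

lemma joukowski_mem_bernsteinEllipse {z : ℂ} (hz : 1 ≤ ‖z‖) (hzρ : ‖z‖ < ρ) :
    joukowski z ∈ bernsteinEllipse ρ := by
  have hz₀ : z ≠ 0 := norm_pos_iff.1 (by linarith)
  exact (norm_joukowski_sub_one_add_norm_joukowski_add_one hz₀).trans_lt
    (add_inv_lt_add_inv hz hzρ)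

lemma joukowski_coe_circle (z : Circle) : joukowski z = (z : ℂ).re := by
  rw [joukowski, ← Circle.coe_inv, Circle.coe_inv_eq_conj, add_conj]
  simp

lemma differentiableAt_joukowski {z : ℂ} (hz : z ≠ 0) : DifferentiableAt ℂ joukowski z := by
  unfold joukowski
  fun_prop (disch := assumption)

end BernsteinEllipse

section Truncation

variable {f : ℝ → ℝ} {F : ℂ → ℂ} {ρ M : ℝ}

lemma norm_fourierCoeff_circleLift_le_of_lt {r : ℝ} (hr : 1 ≤ r) (hrρ : r < ρ)
    (hF : DifferentiableOn ℂ F (bernsteinEllipse ρ)) (hFM : ∀ w ∈ bernsteinEllipse ρ, ‖F w‖ ≤ M)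
    (hfF : ∀ t ∈ Icc (-1 : ℝ) 1, F t = f t) (n : ℤ) :
    ‖fourierCoeff (circleLift f) n‖ ≤ M * r ^ (-n) := by
  have hlift : circleLift f = fun θ ↦ (F ∘ joukowski) θ.toCircle := by
    ext θ
    rw [Function.comp_apply, joukowski_coe_circle, hfF _ (re_coe_circle_mem_Icc _), circleLift]
  have hdiff (z : ℂ) (hz : 1 ≤ ‖z‖) (hzr : ‖z‖ ≤ r) : DifferentiableAt ℂ (F ∘ joukowski) z :=
    (hF.differentiableAt ((isOpen_bernsteinEllipse ρ).mem_nhds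
      (joukowski_mem_bernsteinEllipse hz (hzr.trans_lt hrρ)))).comp z
      (differentiableAt_joukowski (norm_pos_iff.1 (by linarith)))
  rw [hlift]
  refine norm_fourierCoeff_comp_toCircle_le hr (fun z hz ↦ ?_) (fun z hz ↦ ?_) (fun z hz ↦ ?_) n
  · rw [Set.mem_sdiff, mem_closedBall_zero_iff, mem_ball_zero_iff, not_lt] at hz
    exact (hdiff z hz.2 hz.1).continuousAt.continuousWithinAt
  · rw [Set.mem_sdiff, mem_closedBall_zero_iff, mem_ball_zero_iff, not_le] at hz
    exact hdiff z hz.2.le hz.1.le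
  · rw [mem_sphere_zero_iff_norm] at hz
    exact hFM _ (joukowski_mem_bernsteinEllipse (hz ▸ hr) (hz ▸ hrρ))

lemma continuousOn_Icc_of_differentiableOn (hρ : 1 < ρ)
    (hF : DifferentiableOn ℂ F (bernsteinEllipse ρ)) (hfF : ∀ t ∈ Icc (-1 : ℝ) 1, F t = f t) :
    ContinuousOn f (Icc (-1) 1) := by
  have hFre : ContinuousOn (fun t : ℝ ↦ (F t).re) (Icc (-1) 1) :=
    continuous_re.comp_continuousOn (hF.continuousOn.comp continuous_ofReal.continuousOn
      fun t ht ↦ ofReal_mem_bernsteinEllipse hρ ht)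
  exact hFre.congr fun t ht ↦ by simp only [hfF t ht, ofReal_re]

lemma abs_chebyshevCoeff_le_of_differentiableOn (hρ : 1 < ρ)
    (hF : DifferentiableOn ℂ F (bernsteinEllipse ρ)) (hFM : ∀ w ∈ bernsteinEllipse ρ, ‖F w‖ ≤ M)
    (hfF : ∀ t ∈ Icc (-1 : ℝ) 1, F t = f t) (n : ℕ) :
    |chebyshevCoeff f n| ≤ 2 * M * ρ⁻¹ ^ n := by
  have hf := continuousOn_Icc_of_differentiableOn hρ hF hfF
  have hbound : ∀ r ∈ Ioo 1 ρ, |chebyshevCoeff f n| ≤ 2 * M * r⁻¹ ^ n := fun r hr ↦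
    calc |chebyshevCoeff f n| ≤ 2 * ‖fourierCoeff (circleLift f) n‖ := abs_chebyshevCoeff_le hf n
      _ ≤ 2 * (M * r ^ (-n : ℤ)) := by
        gcongr
        exact norm_fourierCoeff_circleLift_le_of_lt hr.1.le hr.2 hF hFM hfF n
      _ = 2 * M * r⁻¹ ^ n := by rw [zpow_neg, zpow_natCast, inv_pow, mul_assoc]
  have hlim : Tendsto (fun r : ℝ ↦ 2 * M * r⁻¹ ^ n) (𝓝[<] ρ) (𝓝 (2 * M * ρ⁻¹ ^ n)) :=
    (((tendsto_inv₀ (by linarith)).pow n).const_mul (2 * M)).mono_left nhdsWithin_le_nhds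
  exact ge_of_tendsto hlim (mem_of_superset (Ioo_mem_nhdsLT hρ) hbound)

theorem abs_sub_chebyshevSum_le (hρ : 1 < ρ)
    (hF : DifferentiableOn ℂ F (bernsteinEllipse ρ)) (hFM : ∀ w ∈ bernsteinEllipse ρ, ‖F w‖ ≤ M)
    (hfF : ∀ t ∈ Icc (-1 : ℝ) 1, F t = f t) (k : ℕ) {t : ℝ} (ht : t ∈ Icc (-1 : ℝ) 1) :
    |f t - chebyshevSum f k t| ≤ 2 * M * ρ ^ (-(k : ℤ)) / (ρ - 1) := by
  have hq : ρ⁻¹ < 1 := inv_lt_one_of_one_lt₀ hρ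
  have hcoeff := abs_chebyshevCoeff_le_of_differentiableOn hρ hF hFM hfF
  have hsummable : Summable (chebyshevCoeff f) :=
    .of_norm_bounded ((summable_geometric_of_lt_one (by positivity) hq).mul_left (2 * M)) hcoeff
  have hterm (n : ℕ) : ‖chebyshevCoeff f n * (Chebyshev.T ℝ n).eval t‖ ≤ 2 * M * ρ⁻¹ ^ n := by
    rw [norm_mul]
    exact (mul_le_of_le_one_right (norm_nonneg _)
      (Chebyshev.abs_eval_T_real_le_one n (abs_le.2 ht))).trans (hcoeff n)
  have htail := norm_sub_le_of_geometric_bound_of_hasSum hq hterm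
    (hasSum_chebyshevCoeff_mul_eval_T
      (continuousOn_Icc_of_differentiableOn hρ hF hfF) hsummable ht) (k + 1)
  rw [norm_sub_rev] at htail
  refine htail.trans_eq ?_
  have hsub : ρ - 1 ≠ 0 := sub_ne_zero.2 hρ.ne'
  rw [zpow_neg, zpow_natCast, pow_succ, inv_pow]
  field_simp

lemma sub_mul_le_re_of_mem_bernsteinEllipse {h : ℝ} (hh : 0 ≤ h) (c : ℝ) {w : ℂ}
    (hw : w ∈ bernsteinEllipse ρ) : c - h * ((ρ + ρ⁻¹) / 2) ≤ (c + h * w : ℂ).re := by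
  have hre : -((ρ + ρ⁻¹) / 2) ≤ w.re :=
    (neg_lt_of_abs_lt ((abs_re_le_norm w).trans_lt (norm_lt_of_mem_bernsteinEllipse hw))).le
  rw [add_re, ofReal_re, re_ofReal_mul]
  linarith [mul_le_mul_of_nonneg_left hre hh]

theorem abs_rpow_neg_sub_chebyshevSum_le {c h s : ℝ} (hρ : 1 < ρ) (hh : 0 ≤ h) (hs : 0 ≤ s)
    (hpos : 0 < c - h * ((ρ + ρ⁻¹) / 2)) (k : ℕ) {t : ℝ} (ht : t ∈ Icc (-1 : ℝ) 1) :
    |(c + h * t) ^ (-s) - chebyshevSum (fun x ↦ (c + h * x) ^ (-s)) k t| ≤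
      2 * ρ ^ (-(k : ℤ)) / ((ρ - 1) * (c - h * ((ρ + ρ⁻¹) / 2)) ^ s) := by
  set m := c - h * ((ρ + ρ⁻¹) / 2)
  let F : ℂ → ℂ := fun w ↦ (c + h * w) ^ ((-s : ℝ) : ℂ)
  have hre (w : ℂ) (hw : w ∈ bernsteinEllipse ρ) : m ≤ (c + h * w : ℂ).re :=
    sub_mul_le_re_of_mem_bernsteinEllipse hh c hw
  have hF : DifferentiableOn ℂ F (bernsteinEllipse ρ) :=
    DifferentiableOn.cpow_const (by fun_prop) fun w hw ↦ .inl (hpos.trans_le (hre w hw))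
  have hFM (w : ℂ) (hw : w ∈ bernsteinEllipse ρ) : ‖F w‖ ≤ m ^ (-s) := by
    rw [norm_cpow_real]
    exact Real.rpow_le_rpow_of_nonpos hpos ((hre w hw).trans (re_le_norm _)) (neg_nonpos.2 hs)
  have hfF (x : ℝ) (hx : x ∈ Icc (-1 : ℝ) 1) : F x = ((c + h * x) ^ (-s) : ℝ) := by
    have hx₀ := hpos.trans_le (hre x (ofReal_mem_bernsteinEllipse hρ hx))
    rw [← ofReal_mul, ← ofReal_add, ofReal_re] at hx₀
    rw [ofReal_cpow hx₀.le, ofReal_add, ofReal_mul]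
  refine (abs_sub_chebyshevSum_le (f := fun x ↦ (c + h * x) ^ (-s)) hρ hF hFM hfF k ht).trans_eq ?_
  rw [Real.rpow_neg hpos.le]
  field_simp

lemma half_add_inv_lt_of_lt_add_sqrt {x : ℝ} (hρ : 1 < ρ) (hρx : ρ < x + √(x ^ 2 - 1)) :
    (ρ + ρ⁻¹) / 2 < x := by
  have hinv : ρ⁻¹ < 1 := inv_lt_one_of_one_lt₀ hρ
  obtain hle | hlt := le_or_gt ρ x
  · linarith
  · have hsq : (ρ - x) ^ 2 < x ^ 2 - 1 := (Real.lt_sqrt (by linarith)).1 (by linarith)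
    have hquad : ρ ^ 2 + 1 < 2 * x * ρ := by linarith
    have hρ₀ : 0 < ρ := by linarith
    calc (ρ + ρ⁻¹) / 2 = (ρ ^ 2 + 1) / (2 * ρ) := by field_simp
      _ < x := by rw [div_lt_iff₀ (mul_pos two_pos hρ₀)]; linarith [hquad]

end Truncation

end

/-- Theorem 2.3 of the paper: for `g(t) = (c+ht)^{-1/2}` and `q(t) = (c+ht)^{-1}` with
`c = (a+b)/2`, `h = (b−a)/2`, `0 < a < b`, and any `1 < ρ < c/h + √((c/h)²−1)`, the
truncated Chebyshev expansions `g_{k₁}` and `q_{k₂}` satisfy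
`‖g − g_{k₁}‖_∞ ≤ 2ρ^{−k₁}/((ρ−1)√(c − h(ρ+ρ⁻¹)/2))` and
`‖q − q_{k₂}‖_∞ ≤ 2ρ^{−k₂}/((ρ−1)(c − h(ρ+ρ⁻¹)/2))`. -/
theorem chebyshev_bound_inv_sqrt_and_inv (a b c h ρ : ℝ)
    (ha : 0 < a) (hab : a < b)
    (hc : c = (a + b) / 2) (hh : h = (b - a) / 2)
    (hρ1 : 1 < ρ) (hρ2 : ρ < c / h + Real.sqrt ((c / h) ^ 2 - 1))
    (g q : ℝ → ℝ)
    (hg : ∀ t : ℝ, g t = (c + h * t) ^ (-(1 / 2 : ℝ)))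
    (hq : ∀ t : ℝ, q t = (c + h * t)⁻¹)
    (k₁ k₂ : ℕ) (γ β : ℕ → ℝ)
    (hγ : ∀ i : ℕ, γ i = ((2 - if i = 0 then 1 else 0) / Real.pi) *
      ∫ s in (-1 : ℝ)..1, g s * (Polynomial.Chebyshev.T ℝ i).eval s / Real.sqrt (1 - s ^ 2))
    (hβ : ∀ i : ℕ, β i = ((2 - if i = 0 then 1 else 0) / Real.pi) *
      ∫ s in (-1 : ℝ)..1, q s * (Polynomial.Chebyshev.T ℝ i).eval s / Real.sqrt (1 - s ^ 2))
    (gk qk : ℝ → ℝ)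
    (hgk : ∀ t : ℝ, gk t = ∑ i ∈ Finset.range (k₁ + 1),
      γ i * (Polynomial.Chebyshev.T ℝ i).eval t)
    (hqk : ∀ t : ℝ, qk t = ∑ i ∈ Finset.range (k₂ + 1),
      β i * (Polynomial.Chebyshev.T ℝ i).eval t) :
    (∀ t ∈ Set.Icc (-1 : ℝ) 1, |g t - gk t| ≤
        2 * ρ ^ (-(k₁ : ℤ)) / ((ρ - 1) * Real.sqrt (c - h * ((ρ + ρ⁻¹) / 2)))) ∧
    (∀ t ∈ Set.Icc (-1 : ℝ) 1, |q t - qk t| ≤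
        2 * ρ ^ (-(k₂ : ℤ)) / ((ρ - 1) * (c - h * ((ρ + ρ⁻¹) / 2)))) := by
  have hh₀ : 0 < h := by linarith
  have hpos : 0 < c - h * ((ρ + ρ⁻¹) / 2) := by
    have hlt := half_add_inv_lt_of_lt_add_sqrt hρ1 hρ2
    rw [lt_div_iff₀ hh₀] at hlt
    linarith
  obtain rfl : γ = chebyshevCoeff g := funext hγ
  obtain rfl : β = chebyshevCoeff q := funext hβ
  obtain rfl : gk = chebyshevSum g k₁ := funext hgk
  obtain rfl : qk = chebyshevSum q k₂ := funext hqk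
  obtain rfl : g = fun t ↦ (c + h * t) ^ (-(1 / 2 : ℝ)) := funext hg
  obtain rfl : q = fun t ↦ (c + h * t) ^ (-1 : ℝ) :=
    funext fun t ↦ (hq t).trans (Real.rpow_neg_one _).symm
  refine ⟨fun t ht ↦ ?_, fun t ht ↦ ?_⟩
  · rw [Real.sqrt_eq_rpow]
    exact abs_rpow_neg_sub_chebyshevSum_le hρ1 hh₀.le (by norm_num) hpos k₁ ht
  · rw [← Real.rpow_one (c - h * ((ρ + ρ⁻¹) / 2))]
    exact abs_rpow_neg_sub_chebyshevSum_le hρ1 hh₀.le zero_le_one hpos k₂ ht
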